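/- Fix m ≥ 0, g_s > 0, T0 > 0, F > 0, z ∈ {−1, 1}. On the open set of μ0 ∈ ℝ satisfying the positivity condition (z = 1, or z = −1 and mF > μ0), the functions μ0 ↦ ρ, μ0 ↦ σ, μ0 ↦ n (energy density, entropy density, particle density as functions of the chemical-potential parameter, all other parameters fixed) are differentiable and satisfy the chemical-potential component of the first law: F·∂ρ/∂μ0 = T0·∂σ/∂μ0 + μ0·∂n/∂μ0. -/

import Mathlib

/-!
Write `A`, `B`, `C` for the integrals over `(m, ∞)` of `(ε² − m²)^{3/2} 𝒩`, `(ε² − m²)^{1/2} 𝒩` and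
`(ε² − m²)^{1/2} ε 𝒩`. Then `ρ = 4π (A + m² B)`, `T0 σ = 4πF (4/3 A + m² B) − 4π μ0 C` and
`n = 4π C`, so after differentiating in `μ0` the first law reduces to `F ∂A/∂μ0 = 3 C`. Since `𝒩`
depends on `εF − μ0` only, `F ∂𝒩/∂μ0 = −∂𝒩/∂ε`, and this identity is an integration by parts
(`integral_by_parts`), whose boundary terms vanish.

Differentiation under the integral sign (`hasDerivAt_moment`) is justified by domination: locally
uniformly in `μ0`, both `𝒩` and `∂𝒩/∂μ0` are at most `K exp(−εF/T0)` on `ε ≥ m` (`phaseN_bounds`).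
For `z = −1` this uses that `mF − μ0` stays bounded away from `0`.
-/

open MeasureTheory Real Set

/-- One-particle phase-space density (Planck units, h³ = 8π³):
`𝒩(E) = (g_s/(8π³)) · (exp((E − μ0)/T0) + z)⁻¹`. -/
noncomputable def phaseN (gs T0 μ0 z E : ℝ) : ℝ :=
  gs / (8 * π ^ 3) * (Real.exp ((E - μ0) / T0) + z)⁻¹

/-- Energy density `ρ = 4π ∫_m^∞ [(ε² − m²)^{3/2} + m²(ε² − m²)^{1/2}] 𝒩(εF) dε`. -/
noncomputable def rhoDef (gs m T0 μ0 z F : ℝ) : ℝ :=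
  4 * π * ∫ ε in Ioi m,
    ((ε ^ 2 - m ^ 2) ^ ((3 : ℝ) / 2) + m ^ 2 * (ε ^ 2 - m ^ 2) ^ ((1 : ℝ) / 2))
      * phaseN gs T0 μ0 z (ε * F)

/-- Pressure `P = (4π/3) ∫_m^∞ (ε² − m²)^{3/2} 𝒩(εF) dε`. -/
noncomputable def Pdef (gs m T0 μ0 z F : ℝ) : ℝ :=
  4 * π / 3 * ∫ ε in Ioi m, (ε ^ 2 - m ^ 2) ^ ((3 : ℝ) / 2) * phaseN gs T0 μ0 z (ε * F)

/-- Entropy density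
`σ = (4πF/T0) ∫_m^∞ [(4/3)(ε² − m²)^{3/2} + (ε² − m²)^{1/2}(m² − ε μ0/F)] 𝒩(εF) dε`. -/
noncomputable def sigmaDef (gs m T0 μ0 z F : ℝ) : ℝ :=
  4 * π * F / T0 * ∫ ε in Ioi m,
    ((4 / 3) * (ε ^ 2 - m ^ 2) ^ ((3 : ℝ) / 2)
      + (ε ^ 2 - m ^ 2) ^ ((1 : ℝ) / 2) * (m ^ 2 - ε * μ0 / F))
      * phaseN gs T0 μ0 z (ε * F)

/-- Particle density `n = 4π ∫_m^∞ (ε² − m²)^{1/2} ε 𝒩(εF) dε`. -/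
noncomputable def nDef (gs m T0 μ0 z F : ℝ) : ℝ :=
  4 * π * ∫ ε in Ioi m, (ε ^ 2 - m ^ 2) ^ ((1 : ℝ) / 2) * ε * phaseN gs T0 μ0 z (ε * F)


/-- The derivative of `phaseN` with respect to the chemical-potential parameter `μ0`. -/
noncomputable def dphaseN (gs T0 μ0 z E : ℝ) : ℝ :=
  gs / (8 * π ^ 3) *
    (Real.exp ((E - μ0) / T0) / T0 / (Real.exp ((E - μ0) / T0) + z) ^ 2)

lemma hasDerivAt_phaseN_mu {gs T0 u z E : ℝ} (hD : 0 < Real.exp ((E - u) / T0) + z) :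
    HasDerivAt (fun u => phaseN gs T0 u z E) (dphaseN gs T0 u z E) u := by
  have h1 : HasDerivAt (fun u : ℝ => (E - u) / T0) (-1 / T0) u :=
    ((hasDerivAt_id u).const_sub E).div_const T0
  have h2 := ((h1.exp.add_const z).inv hD.ne').const_mul (gs / (8 * π ^ 3))
  refine h2.congr_deriv ?_
  unfold dphaseN
  ring

lemma hasDerivAt_phaseN_eps {gs T0 u z F ε : ℝ} (hD : 0 < Real.exp ((ε * F - u) / T0) + z) :
    HasDerivAt (fun ε => phaseN gs T0 u z (ε * F)) (-F * dphaseN gs T0 u z (ε * F)) ε := by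
  have h1 : HasDerivAt (fun ε : ℝ => (ε * F - u) / T0) (1 * F / T0) ε :=
    (((hasDerivAt_id ε).mul_const F).sub_const u).div_const T0
  have h2 := ((h1.exp.add_const z).inv hD.ne').const_mul (gs / (8 * π ^ 3))
  refine h2.congr_deriv ?_
  unfold dphaseN
  ring

/-- The denominator `exp((εF − u)/T0) + z` is at least a fixed positive multiple of its
exponential, uniformly in `u ≤ v` and `ε ≥ m`. -/
lemma denom_bound {m T0 F z v : ℝ} (hT0 : 0 < T0) (hF : 0 < F) (hz : z = -1 ∨ z = 1)
    (hv : z = -1 → v < m * F) :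
    ∃ c > 0, ∀ u ≤ v, ∀ ε ≥ m,
      c * Real.exp ((ε * F - u) / T0) ≤ Real.exp ((ε * F - u) / T0) + z := by
  rcases hz with rfl | rfl
  · have hv := hv rfl
    refine ⟨1 - Real.exp ((v - m * F) / T0), ?_, fun u hu ε hε => ?_⟩
    · have : Real.exp ((v - m * F) / T0) < 1 := by
        rw [Real.exp_lt_one_iff]
        exact div_neg_of_neg_of_pos (by linarith) hT0
      linarith
    · have : 1 ≤ Real.exp ((v - m * F) / T0) * Real.exp ((ε * F - u) / T0) := by
        rw [← Real.exp_add, ← add_div]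
        apply Real.one_le_exp
        have := mul_le_mul_of_nonneg_right hε hF.le
        exact div_nonneg (by linarith) hT0.le
      linarith
  · exact ⟨1, one_pos, fun u _ ε _ => by linarith⟩

/-- Positivity of the denominator and exponential decay of `phaseN` and its `μ0`-derivative,
uniformly in `u ≤ v`: the domination used throughout. -/
lemma phaseN_bounds {m gs T0 F z v : ℝ} (hgs : 0 < gs) (hT0 : 0 < T0) (hF : 0 < F)
    (hz : z = -1 ∨ z = 1) (hv : z = -1 → v < m * F) :
    ∃ K, ∀ u ≤ v, ∀ ε ≥ m,
      0 < Real.exp ((ε * F - u) / T0) + z ∧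
      ‖phaseN gs T0 u z (ε * F)‖ ≤ K * Real.exp (-(F / T0) * ε) ∧
      ‖dphaseN gs T0 u z (ε * F)‖ ≤ K * Real.exp (-(F / T0) * ε) := by
  obtain ⟨c, hc, h⟩ := denom_bound (m := m) hT0 hF hz hv
  have hg : 0 < gs / (8 * π ^ 3) := by positivity
  refine ⟨gs / (8 * π ^ 3) * (1 / c + 1 / (c ^ 2 * T0)) * Real.exp (v / T0),
    fun u hu ε hε => ?_⟩
  have hD := h u hu ε hε
  have hw : (Real.exp ((ε * F - u) / T0))⁻¹
      ≤ Real.exp (v / T0) * Real.exp (-(F / T0) * ε) := by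
    rw [← Real.exp_neg, ← Real.exp_add]
    apply Real.exp_le_exp.2
    have := div_le_div_of_nonneg_right hu hT0.le
    calc -((ε * F - u) / T0) = u / T0 + -(F / T0) * ε := by ring
      _ ≤ _ := by linarith
  unfold phaseN dphaseN
  have hw0 := Real.exp_pos ((ε * F - u) / T0)
  set w := Real.exp ((ε * F - u) / T0)
  have hcw : 0 < c * w := by positivity
  have hpos : 0 < w + z := hcw.trans_le hD
  have hA : (w + z)⁻¹ ≤ 1 / c * w⁻¹ := by
    calc (w + z)⁻¹ ≤ (c * w)⁻¹ := inv_anti₀ hcw hD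
      _ = _ := by rw [mul_inv, one_div]
  have hB : w / T0 / (w + z) ^ 2 ≤ 1 / (c ^ 2 * T0) * w⁻¹ := by
    calc w / T0 / (w + z) ^ 2 ≤ w / T0 / (c * w) ^ 2 := by gcongr
      _ = _ := by field_simp
  have e0 : 0 ≤ w⁻¹ := by positivity
  have e1 : 0 ≤ 1 / c := by positivity
  have e2 : 0 ≤ 1 / (c ^ 2 * T0) := by positivity
  have key : (1 / c + 1 / (c ^ 2 * T0)) * w⁻¹
      ≤ (1 / c + 1 / (c ^ 2 * T0)) * (Real.exp (v / T0) * Real.exp (-(F / T0) * ε)) :=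
    mul_le_mul_of_nonneg_left hw (by positivity)
  have p1 := mul_nonneg e1 e0
  have p2 := mul_nonneg e2 e0
  have q1 : 0 ≤ (w + z)⁻¹ := by positivity
  have q2 : 0 ≤ w / T0 / (w + z) ^ 2 := by positivity
  refine ⟨hpos, ?_, ?_⟩
  · rw [Real.norm_of_nonneg (mul_nonneg hg.le q1), mul_assoc, mul_assoc]
    exact mul_le_mul_of_nonneg_left (by linarith) hg.le
  · rw [Real.norm_of_nonneg (mul_nonneg hg.le q2), mul_assoc, mul_assoc]
    exact mul_le_mul_of_nonneg_left (by linarith) hg.le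

lemma integrableOn_pow_mul_exp {m b : ℝ} (hm : 0 ≤ m) (hb : 0 < b) (k : ℕ) :
    IntegrableOn (fun ε : ℝ => ε ^ k * Real.exp (-b * ε)) (Ioi m) := by
  have h := integrableOn_rpow_mul_exp_neg_mul_rpow (p := 1) (s := k) (b := b)
    (by have : (0 : ℝ) ≤ k := k.cast_nonneg
        linarith) one_pos hb
  simp only [Real.rpow_natCast, Real.rpow_one] at h
  exact h.mono_set (Ioi_subset_Ioi hm)

lemma measurable_phaseN_eps (gs T0 u z F : ℝ) :
    Measurable fun ε : ℝ => phaseN gs T0 u z (ε * F) := by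
  unfold phaseN; fun_prop

lemma measurable_dphaseN_eps (gs T0 u z F : ℝ) :
    Measurable fun ε : ℝ => dphaseN gs T0 u z (ε * F) := by
  unfold dphaseN; fun_prop

/-- Integrability and differentiation under the integral sign for a weight `f` of polynomial
growth. -/
lemma hasDerivAt_moment {m gs T0 F z μ0 : ℝ} (hm : 0 ≤ m) (hgs : 0 < gs) (hT0 : 0 < T0)
    (hF : 0 < F) (hz : z = -1 ∨ z = 1) (hμ : z = -1 → μ0 < m * F)
    {f : ℝ → ℝ} (hf : Measurable f) (k : ℕ) (hfk : ∀ ε > m, ‖f ε‖ ≤ ε ^ k) :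
    IntegrableOn (fun ε => f ε * phaseN gs T0 μ0 z (ε * F)) (Ioi m) ∧
    IntegrableOn (fun ε => f ε * dphaseN gs T0 μ0 z (ε * F)) (Ioi m) ∧
    HasDerivAt (fun u => ∫ ε in Ioi m, f ε * phaseN gs T0 u z (ε * F))
      (∫ ε in Ioi m, f ε * dphaseN gs T0 μ0 z (ε * F)) μ0 := by
  obtain ⟨v, hμv, hv⟩ : ∃ v, μ0 < v ∧ (z = -1 → v < m * F) := by
    by_cases h : z = -1
    · obtain ⟨v, h1, h2⟩ := exists_between (hμ h)
      exact ⟨v, h1, fun _ => h2⟩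
    · exact ⟨μ0 + 1, by linarith, fun h' => absurd h' h⟩
  obtain ⟨K, hK⟩ := phaseN_bounds hgs hT0 hF hz hv
  have hbound : IntegrableOn (fun ε : ℝ => K * (ε ^ k * Real.exp (-(F / T0) * ε))) (Ioi m) :=
    (integrableOn_pow_mul_exp hm (div_pos hF hT0) k).const_mul K
  have dom : ∀ ε > m, ∀ a : ℝ, ‖a‖ ≤ K * Real.exp (-(F / T0) * ε) →
      ‖f ε * a‖ ≤ K * (ε ^ k * Real.exp (-(F / T0) * ε)) := by
    intro ε hε a ha
    have hε0 : 0 < ε := hm.trans_lt hε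
    calc ‖f ε * a‖ = ‖f ε‖ * ‖a‖ := norm_mul _ _
      _ ≤ ε ^ k * (K * Real.exp (-(F / T0) * ε)) :=
        mul_le_mul (hfk ε hε) ha (norm_nonneg _) (by positivity)
      _ = _ := by ring
  have hint : IntegrableOn (fun ε => f ε * phaseN gs T0 μ0 z (ε * F)) (Ioi m) := by
    refine Integrable.mono' hbound
      (hf.mul (measurable_phaseN_eps gs T0 μ0 z F)).aestronglyMeasurable ?_
    filter_upwards [ae_restrict_mem measurableSet_Ioi] with ε hε
    exact dom ε hε _ (hK μ0 hμv.le ε (le_of_lt hε)).2.1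
  obtain ⟨h1, h2⟩ := hasDerivAt_integral_of_dominated_loc_of_deriv_le
    (μ := volume.restrict (Ioi m)) (x₀ := μ0) (s := Iio v)
    (F := fun u ε => f ε * phaseN gs T0 u z (ε * F))
    (F' := fun u ε => f ε * dphaseN gs T0 u z (ε * F))
    (bound := fun ε => K * (ε ^ k * Real.exp (-(F / T0) * ε)))
    (Iio_mem_nhds hμv)
    (Filter.Eventually.of_forall fun u =>
      (hf.mul (measurable_phaseN_eps gs T0 u z F)).aestronglyMeasurable)
    hint (hf.mul (measurable_dphaseN_eps gs T0 μ0 z F)).aestronglyMeasurable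
    (by
      filter_upwards [ae_restrict_mem measurableSet_Ioi] with ε hε u hu
      exact dom ε hε _ (hK u (le_of_lt hu) ε (le_of_lt hε)).2.2)
    hbound
    (by
      filter_upwards [ae_restrict_mem measurableSet_Ioi] with ε hε u hu
      exact (hasDerivAt_phaseN_mu (hK u (le_of_lt hu) ε (le_of_lt hε)).1).const_mul (f ε))
  exact ⟨hint, h1, h2⟩

lemma norm_rpow_le {m ε : ℝ} (hm : 0 ≤ m) (hε : m < ε) (k : ℕ) :
    ‖(ε ^ 2 - m ^ 2) ^ ((k : ℝ) / 2)‖ ≤ ε ^ k := by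
  have h0 : 0 ≤ ε ^ 2 - m ^ 2 := by nlinarith
  have hε0 : 0 ≤ ε := hm.trans hε.le
  rw [Real.norm_of_nonneg (Real.rpow_nonneg h0 _)]
  calc (ε ^ 2 - m ^ 2) ^ ((k : ℝ) / 2) ≤ (ε ^ 2) ^ ((k : ℝ) / 2) :=
        Real.rpow_le_rpow h0 (by nlinarith) (by positivity)
    _ = ε ^ k := by
        rw [← Real.rpow_natCast ε 2, ← Real.rpow_mul hε0, ← Real.rpow_natCast ε k]
        congr 1
        push_cast
        ring

/-- The integration by parts behind the first law:
`F ∫ (ε² − m²)^{3/2} ∂𝒩/∂μ0 dε = 3 ∫ (ε² − m²)^{1/2} ε 𝒩 dε`. The boundary term at `m` vanishes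
because of the weight, the one at `∞` because of the exponential decay. -/
lemma integral_by_parts {m gs T0 F z μ0 : ℝ} (hm : 0 ≤ m) (hgs : 0 < gs) (hT0 : 0 < T0)
    (hF : 0 < F) (hz : z = -1 ∨ z = 1) (hμ : z = -1 → μ0 < m * F)
    (hA : IntegrableOn (fun ε => (ε ^ 2 - m ^ 2) ^ ((3 : ℝ) / 2) *
      dphaseN gs T0 μ0 z (ε * F)) (Ioi m))
    (hC : IntegrableOn (fun ε => (ε ^ 2 - m ^ 2) ^ ((1 : ℝ) / 2) * ε *
      phaseN gs T0 μ0 z (ε * F)) (Ioi m)) :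
    F * ∫ ε in Ioi m, (ε ^ 2 - m ^ 2) ^ ((3 : ℝ) / 2) * dphaseN gs T0 μ0 z (ε * F)
      = 3 * ∫ ε in Ioi m, (ε ^ 2 - m ^ 2) ^ ((1 : ℝ) / 2) * ε * phaseN gs T0 μ0 z (ε * F) := by
  obtain ⟨K, hK⟩ := phaseN_bounds hgs hT0 hF hz hμ
  have hderiv : ∀ ε ∈ Ici m, HasDerivAt
      (fun ε => (ε ^ 2 - m ^ 2) ^ ((3 : ℝ) / 2) * phaseN gs T0 μ0 z (ε * F))
      (3 * ((ε ^ 2 - m ^ 2) ^ ((1 : ℝ) / 2) * ε * phaseN gs T0 μ0 z (ε * F))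
        - F * ((ε ^ 2 - m ^ 2) ^ ((3 : ℝ) / 2) * dphaseN gs T0 μ0 z (ε * F))) ε := by
    intro ε hε
    have h1 : HasDerivAt (fun ε : ℝ => ε ^ 2 - m ^ 2) (2 * ε) ε := by
      simpa using (hasDerivAt_pow 2 ε).sub_const (m ^ 2)
    have h2 := h1.rpow_const (p := (3 : ℝ) / 2) (Or.inr (by norm_num))
    have h3 := h2.mul (hasDerivAt_phaseN_eps (gs := gs) (hK μ0 le_rfl ε hε).1)
    refine h3.congr_deriv ?_
    rw [show (3 : ℝ) / 2 - 1 = 1 / 2 by norm_num]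
    ring
  have hlim : Filter.Tendsto
      (fun ε => (ε ^ 2 - m ^ 2) ^ ((3 : ℝ) / 2) * phaseN gs T0 μ0 z (ε * F))
      Filter.atTop (nhds 0) := by
    have hdecay : Filter.Tendsto (fun ε : ℝ => K * (ε ^ 3 * Real.exp (-(F / T0) * ε)))
        Filter.atTop (nhds 0) := by
      have := (isLittleO_pow_exp_pos_mul_atTop 3 (div_pos hF hT0)).tendsto_div_nhds_zero
      have := this.const_mul K
      rw [mul_zero] at this
      refine this.congr fun ε => ?_
      rw [neg_mul, Real.exp_neg, div_eq_mul_inv]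
    refine squeeze_zero_norm' ?_ hdecay
    filter_upwards [Filter.eventually_gt_atTop m] with ε hε
    have hw := norm_rpow_le hm hε 3
    push_cast at hw
    have hε0 : 0 < ε := hm.trans_lt hε
    rw [norm_mul]
    calc _ ≤ ε ^ 3 * (K * Real.exp (-(F / T0) * ε)) :=
          mul_le_mul hw (hK μ0 le_rfl ε hε.le).2.1 (norm_nonneg _) (by positivity)
      _ = _ := by ring
  have hmain := integral_Ioi_of_hasDerivAt_of_tendsto' hderiv
    ((hC.const_mul 3).sub (hA.const_mul F)) hlim
  rw [integral_sub (hC.const_mul 3) (hA.const_mul F), integral_const_mul, integral_const_mul,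
    sub_self (m ^ 2), Real.zero_rpow (by norm_num)] at hmain
  linarith

/-- The energy density, entropy density and particle density are differentiable functions of
the chemical-potential parameter `μ0` on the open set where the positivity condition holds,
and satisfy the chemical-potential component of the first law:
`F ∂ρ/∂μ0 = T0 ∂σ/∂μ0 + μ0 ∂n/∂μ0`. -/
theorem stmt12 (m gs T0 F z : ℝ) (hm : 0 ≤ m) (hgs : 0 < gs) (hT0 : 0 < T0) (hF : 0 < F)
    (hz : z = -1 ∨ z = 1) :
    ∀ μ0 : ℝ, (z = -1 → μ0 < m * F) →
      DifferentiableAt ℝ (fun u => rhoDef gs m T0 u z F) μ0 ∧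
      DifferentiableAt ℝ (fun u => sigmaDef gs m T0 u z F) μ0 ∧
      DifferentiableAt ℝ (fun u => nDef gs m T0 u z F) μ0 ∧
      F * deriv (fun u => rhoDef gs m T0 u z F) μ0
        = T0 * deriv (fun u => sigmaDef gs m T0 u z F) μ0
          + μ0 * deriv (fun u => nDef gs m T0 u z F) μ0 := by
  intro μ0 hμ
  have mom := fun (u : ℝ) (hu : z = -1 → u < m * F) {f : ℝ → ℝ} (hf : Measurable f) (k : ℕ) h =>
    hasDerivAt_moment hm hgs hT0 hF hz hu hf k h
  have fA : Measurable fun ε : ℝ => (ε ^ 2 - m ^ 2) ^ ((3 : ℝ) / 2) := by fun_prop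
  have fB : Measurable fun ε : ℝ => (ε ^ 2 - m ^ 2) ^ ((1 : ℝ) / 2) := by fun_prop
  have fC : Measurable fun ε : ℝ => (ε ^ 2 - m ^ 2) ^ ((1 : ℝ) / 2) * ε := by fun_prop
  have bA : ∀ ε > m, ‖(ε ^ 2 - m ^ 2) ^ ((3 : ℝ) / 2)‖ ≤ ε ^ 3 := fun ε hε => by
    simpa using norm_rpow_le hm hε 3
  have bB : ∀ ε > m, ‖(ε ^ 2 - m ^ 2) ^ ((1 : ℝ) / 2)‖ ≤ ε ^ 1 := fun ε hε => by
    simpa using norm_rpow_le hm hε 1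
  have bC : ∀ ε > m, ‖(ε ^ 2 - m ^ 2) ^ ((1 : ℝ) / 2) * ε‖ ≤ ε ^ 2 := fun ε hε => by
    have hε0 : 0 ≤ ε := hm.trans hε.le
    rw [norm_mul, Real.norm_of_nonneg hε0, pow_succ ε 1]
    exact mul_le_mul_of_nonneg_right (bB ε hε) hε0
  obtain ⟨-, iA, dA⟩ := mom μ0 hμ fA 3 bA
  obtain ⟨-, -, dB⟩ := mom μ0 hμ fB 1 bB
  obtain ⟨iC, -, dC⟩ := mom μ0 hμ fC 2 bC
  have ibp := integral_by_parts hm hgs hT0 hF hz hμ iA iC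
  -- The integrals may only be split where they converge, hence for `u` near `μ0`.
  have hev : ∀ᶠ u in nhds μ0, z = -1 → u < m * F := by
    by_cases h : z = -1
    · filter_upwards [Iio_mem_nhds (hμ h)] with u hu _ using hu
    · exact Filter.Eventually.of_forall fun u h' => absurd h' h
  have hρ := (((dA.add (dB.const_mul (m ^ 2))).const_mul (4 * π))).congr_of_eventuallyEq
    (f₁ := fun u => rhoDef gs m T0 u z F) (by
      filter_upwards [hev] with u hu
      have jA := (mom u hu fA 3 bA).1
      have jB := (mom u hu fB 1 bB).1
      simp only [rhoDef, Pi.add_apply]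
      rw [← integral_const_mul (m ^ 2), ← integral_add jA (jB.const_mul _)]
      congr 2
      ext ε
      ring)
  have hn : HasDerivAt (fun u => nDef gs m T0 u z F) _ μ0 := dC.const_mul (4 * π)
  have hσ := (((dA.const_mul (4 / 3)).add (dB.const_mul (m ^ 2))).sub
      (((hasDerivAt_id μ0).div_const F).mul dC)).const_mul (4 * π * F / T0)
    |>.congr_of_eventuallyEq (f₁ := fun u => sigmaDef gs m T0 u z F) (by
      filter_upwards [hev] with u hu
      have jA := (mom u hu fA 3 bA).1
      have jB := (mom u hu fB 1 bB).1
      have jC := (mom u hu fC 2 bC).1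
      simp only [sigmaDef, Pi.add_apply, Pi.sub_apply, Pi.mul_apply, id]
      rw [← integral_const_mul (4 / 3 : ℝ), ← integral_const_mul (m ^ 2),
        ← integral_const_mul (u / F), ← integral_add' (jA.const_mul _) (jB.const_mul _),
        ← integral_sub' ((jA.const_mul _).add (jB.const_mul _)) (jC.const_mul _)]
      congr 2
      ext ε
      simp only [Pi.add_apply, Pi.sub_apply]
      ring)
  refine ⟨hρ.differentiableAt, hσ.differentiableAt, hn.differentiableAt, ?_⟩
  rw [hρ.deriv, hσ.deriv, hn.deriv]
  simp only [id]
  generalize (∫ ε in Ioi m, (ε ^ 2 - m ^ 2) ^ ((3 : ℝ) / 2) * dphaseN gs T0 μ0 z (ε * F)) = A'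
    at ibp ⊢
  generalize (∫ ε in Ioi m, (ε ^ 2 - m ^ 2) ^ ((1 : ℝ) / 2) * ε * phaseN gs T0 μ0 z (ε * F)) = C
    at ibp ⊢
  field_simp
  linear_combination -ibp
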